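/- Let n ≥ 1, let 0 < s ≤ t and 1 < q₁ ≤ q₂ satisfy (q₂ − 1)/(q₁ − 1) = t/s. Then for every measurable function f : ℝ^n → ℝ with 0 < a ≤ f ≤ b for some constants a, b, and every x ∈ ℝ^n, ( P_s( (P_{t−s} f)^{q₂} )(x) )^{1/q₂} ≤ ( P_t( f^{q₁} )(x) )^{1/q₁}, where P_0 g = g (local hypercontractivity of the heat semigroup, i.e. Theorem on CD(0,∞) hypercontractivity applied to the Laplacian on ℝ^n). -/

import Mathlib

open MeasureTheory Real

/-- Euclidean heat semigroup, with `heat n 0 f = f`. -/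
noncomputable def heat (n : ℕ) (t : ℝ) (f : EuclideanSpace ℝ (Fin n) → ℝ)
    (x : EuclideanSpace ℝ (Fin n)) : ℝ :=
  if t = 0 then f x
  else (4 * π * t) ^ (-(n : ℝ) / 2) * ∫ y, f y * Real.exp (-‖x - y‖ ^ 2 / (4 * t))

section GaussianHypercontractivity

open ProbabilityTheory Filter Set
open scoped Topology

/-- A one-sided third order Taylor estimate for `r ↦ (1 + r) ^ α`. -/
lemma one_add_rpow_le_cubic {α r : ℝ} (hα : 0 < α) (hα1 : α < 1) (hr : -1 < r) :
    (1 + r) ^ α ≤ 1 + α * r - α * (1 - α) / 2 * r ^ 2 + |r| ^ 3 := by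
  have hd : ∀ y : ℝ, -1 < y → HasDerivAt (fun z : ℝ => (1 + z) ^ α) (α * (1 + y) ^ (α - 1)) y := by
    intro y hy
    have h := ((hasDerivAt_id y).const_add 1).rpow_const (p := α) (Or.inl (by simp; linarith))
    convert! h using 1
    simp
  rcases le_total 0 r with h0 | h0
  · set D : ℝ → ℝ := fun z =>
      1 + α * z - α * (1 - α) / 2 * z ^ 2 + z ^ 3 - (1 + z) ^ α with hD
    have hD' : ∀ y : ℝ, 0 ≤ y → HasDerivAt D
        (α - α * (1 - α) * y + 3 * y ^ 2 - α * (1 + y) ^ (α - 1)) y := by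
      intro y hy
      have h1 := (((hasDerivAt_id y).const_mul α).const_add 1).sub
        (((hasDerivAt_pow 2 y)).const_mul (α * (1 - α) / 2))
      have h2 := (h1.add (hasDerivAt_pow 3 y)).sub (hd y (by linarith))
      convert! h2 using 1
      simp
      ring
    have hmono : MonotoneOn D (Ici 0) := by
      refine monotoneOn_of_hasDerivWithinAt_nonneg (convex_Ici 0)
        (fun y hy => (hD' y hy).continuousAt.continuousWithinAt)
        (fun y hy => (hD' y (interior_subset hy)).hasDerivWithinAt) ?_
      intro y hy
      have hy0 : 0 ≤ y := interior_subset hy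
      have hb : (1 + y) ^ (α - 1) ≤ 1 - (1 - α) * y + (1 - α) * y ^ 2 := by
        have e1 : (1 + y) ^ (α - 1) = (1 + -(y / (1 + y))) ^ (1 - α) := by
          rw [show 1 + -(y / (1 + y)) = (1 + y)⁻¹ by field_simp; ring,
            Real.inv_rpow (by linarith), ← Real.rpow_neg (by linarith)]
          congr 1; ring
        have hq : y / (1 + y) ≤ 1 := by rw [div_le_one (by linarith)]; linarith
        have e2 := rpow_one_add_le_one_add_mul_self (s := -(y / (1 + y))) (by linarith)
          (p := 1 - α) (by linarith) (by linarith)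
        have e3 : y - y ^ 2 ≤ y / (1 + y) := by
          rw [le_div_iff₀ (by linarith)]; nlinarith [pow_nonneg hy0 3]
        rw [e1]
        nlinarith [mul_le_mul_of_nonneg_left e3 (by linarith : 0 ≤ 1 - α)]
      nlinarith [mul_le_mul_of_nonneg_left hb hα.le, sq_nonneg y, mul_pos hα (by linarith : 0 < 1 - α),
        mul_nonneg (by nlinarith : 0 ≤ 3 - α * (1 - α)) (sq_nonneg y)]
    have := hmono (mem_Ici.2 le_rfl) (mem_Ici.2 h0) h0
    simp only [hD] at this
    rw [abs_of_nonneg h0]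
    simp at this
    linarith
  · set D : ℝ → ℝ := fun z => 1 + α * z - α * (1 - α) / 2 * z ^ 2 - (1 + z) ^ α with hD
    have hD' : ∀ y : ℝ, -1 < y → HasDerivAt D
        (α - α * (1 - α) * y - α * (1 + y) ^ (α - 1)) y := by
      intro y hy
      have h1 := (((hasDerivAt_id y).const_mul α).const_add 1).sub
        (((hasDerivAt_pow 2 y)).const_mul (α * (1 - α) / 2))
      have h2 := h1.sub (hd y hy)
      convert! h2 using 1
      simp
      ring
    have hanti : AntitoneOn D (Icc r 0) := by
      refine antitoneOn_of_hasDerivWithinAt_nonpos (convex_Icc r 0)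
        (fun y hy => (hD' y (by linarith [hy.1])).continuousAt.continuousWithinAt)
        (fun y hy => (hD' y (by linarith [(interior_subset hy : y ∈ Icc r 0).1])).hasDerivWithinAt) ?_
      intro y hy
      have hy' : y ∈ Icc r 0 := interior_subset hy
      have hy1 : -1 < y := by linarith [hy'.1]
      have hu := rpow_one_add_le_one_add_mul_self hy1.le (p := 1 - α) (by linarith) (by linarith)
      have hpos : 0 < (1 + y) ^ (1 - α) := Real.rpow_pos_of_pos (by linarith) _
      have hb : 1 - (1 - α) * y ≤ (1 + y) ^ (α - 1) := by
        rw [show α - 1 = -(1 - α) by ring, Real.rpow_neg (by linarith), ← one_div,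
          le_div_iff₀ hpos]
        have h1 : 0 ≤ -((1 - α) * y) := by nlinarith [hy'.2]
        nlinarith [mul_le_mul_of_nonneg_left hu (by linarith : 0 ≤ 1 - (1 - α) * y),
          sq_nonneg ((1 - α) * y)]
      nlinarith [mul_le_mul_of_nonneg_left hb hα.le]
    have := hanti ⟨le_rfl, h0⟩ ⟨h0, le_rfl⟩ h0
    simp only [hD] at this
    simp at this
    have := pow_nonneg (abs_nonneg r) 3
    linarith

/-- Second order expansion of `(1 + r) ^ α * (1 + s) ^ β` when `r` and `s` are given up to second
order errors. -/
lemma one_add_rpow_mul_one_add_rpow_le {α β r s h p p' e e' D T : ℝ}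
    (hα : 0 < α) (hα1 : α < 1) (hβ : 0 < β) (hβ1 : β < 1) (hr : -1 < r) (hs : -1 < s)
    (hh : 0 ≤ h) (hh1 : h ≤ 1) (hD : 1 ≤ D) (hT : 1 ≤ T)
    (hre : r = h * p + e) (hse : s = h * p' + e')
    (hp : |p| ≤ D * T) (hp' : |p'| ≤ D * T)
    (he : |e| ≤ D * h ^ 2 * T ^ 2) (he' : |e'| ≤ D * h ^ 2 * T ^ 2) :
    (1 + r) ^ α * (1 + s) ^ β ≤ 1 + α * r + β * s
      + h ^ 2 * (α * β * (p * p') - α * (1 - α) / 2 * p ^ 2 - β * (1 - β) / 2 * p' ^ 2)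
      + 700 * D ^ 6 * h ^ 3 * T ^ 12 := by
  have hc : ∀ {α : ℝ}, 0 < α → α < 1 → 0 ≤ α * (1 - α) / 2 ∧ α * (1 - α) / 2 ≤ 1 := by
    intro α h0 h1
    constructor <;> nlinarith
  have hab0 : 0 ≤ α * β := by positivity
  have hab : α * β ≤ 1 := mul_le_one₀ hα1.le hβ.le hβ1.le
  have hrR : ∀ {r p e : ℝ}, r = h * p + e → |p| ≤ D * T → |e| ≤ D * h ^ 2 * T ^ 2 →
      |r| ≤ 2 * D * h * T ^ 2 := by
    intro r p e hre hp he
    have h1 : |r| ≤ h * |p| + |e| := by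
      rw [hre]
      refine (abs_add_le _ _).trans ?_
      rw [abs_mul, abs_of_nonneg hh]
    have h2 : h * |p| ≤ D * h * T ^ 2 := by
      calc h * |p| ≤ h * (D * T) := by gcongr
        _ = D * h * (T * 1) := by ring
        _ ≤ D * h * (T * T) := by gcongr
        _ = _ := by ring
    have h3 : D * h ^ 2 * T ^ 2 ≤ D * h * T ^ 2 := by
      gcongr
      nlinarith
    linarith
  have hmono : ∀ {i j k : ℕ}, i ≤ 6 → 3 ≤ j → k ≤ 12 →
      D ^ i * h ^ j * T ^ k ≤ D ^ 6 * h ^ 3 * T ^ 12 := by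
    intro i j k hi hj hk
    have := pow_le_pow_right₀ hD hi
    have := pow_le_pow_right₀ hT hk
    have := pow_le_pow_of_le_one hh hh1 hj
    gcongr
  have hrR' := hrR hre hp he
  have hsR' := hrR hse hp' he'
  set Z := D ^ 6 * h ^ 3 * T ^ 12 with hZ
  set R := 2 * D * h * T ^ 2 with hR
  have hR0 : 0 ≤ R := by positivity
  have hR3 : R ^ 3 ≤ 8 * Z := by
    have := hmono (i := 3) (j := 3) (k := 6) (by norm_num) (by norm_num) (by norm_num)
    calc R ^ 3 = 8 * (D ^ 3 * h ^ 3 * T ^ 6) := by rw [hR]; ring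
      _ ≤ _ := by gcongr
  have hR4 : R ^ 4 ≤ 16 * Z := by
    have := hmono (i := 4) (j := 4) (k := 8) (by norm_num) (by norm_num) (by norm_num)
    calc R ^ 4 = 16 * (D ^ 4 * h ^ 4 * T ^ 8) := by rw [hR]; ring
      _ ≤ _ := by gcongr
  have hR5 : R ^ 5 ≤ 32 * Z := by
    have := hmono (i := 5) (j := 5) (k := 10) (by norm_num) (by norm_num) (by norm_num)
    calc R ^ 5 = 32 * (D ^ 5 * h ^ 5 * T ^ 10) := by rw [hR]; ring
      _ ≤ _ := by gcongr
  have hR6 : R ^ 6 ≤ 64 * Z := by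
    have := hmono (i := 6) (j := 6) (k := 12) (by norm_num) (by norm_num) (by norm_num)
    calc R ^ 6 = 64 * (D ^ 6 * h ^ 6 * T ^ 12) := by rw [hR]; ring
      _ ≤ _ := by gcongr
  have hquad : ∀ {r s p p' e e' : ℝ}, r = h * p + e → s = h * p' + e' → |p| ≤ D * T →
      |p'| ≤ D * T → |e| ≤ D * h ^ 2 * T ^ 2 → |e'| ≤ D * h ^ 2 * T ^ 2 →
      |r * s - h ^ 2 * (p * p')| ≤ 3 * Z := by
    intro r s p p' e e' hr hs hp hp' he he'
    have e1 : r * s - h ^ 2 * (p * p') = h * (p * e') + h * (p' * e) + e * e' := by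
      rw [hr, hs]; ring
    have a1 : |h * (p * e')| ≤ D ^ 2 * h ^ 3 * T ^ 3 := by
      rw [abs_mul, abs_mul, abs_of_nonneg hh]
      calc h * (|p| * |e'|) ≤ h * ((D * T) * (D * h ^ 2 * T ^ 2)) := by gcongr
        _ = _ := by ring
    have a2 : |h * (p' * e)| ≤ D ^ 2 * h ^ 3 * T ^ 3 := by
      rw [abs_mul, abs_mul, abs_of_nonneg hh]
      calc h * (|p'| * |e|) ≤ h * ((D * T) * (D * h ^ 2 * T ^ 2)) := by gcongr
        _ = _ := by ring
    have a3 : |e * e'| ≤ D ^ 2 * h ^ 4 * T ^ 4 := by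
      rw [abs_mul]
      calc |e| * |e'| ≤ (D * h ^ 2 * T ^ 2) * (D * h ^ 2 * T ^ 2) := by gcongr
        _ = _ := by ring
    have b1 := hmono (i := 2) (j := 3) (k := 3) (by norm_num) (by norm_num) (by norm_num)
    have b2 := hmono (i := 2) (j := 4) (k := 4) (by norm_num) (by norm_num) (by norm_num)
    rw [e1]
    have := abs_add_three (h * (p * e')) (h * (p' * e)) (e * e')
    linarith
  have q1 := abs_le.1 (hquad hre hse hp hp' he he')
  have q2 := abs_le.1 (hquad hre hre hp hp he he)
  have q3 := abs_le.1 (hquad hse hse hp' hp' he' he')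
  have hA := one_add_rpow_le_cubic hα hα1 hr
  have hB := one_add_rpow_le_cubic hβ hβ1 hs
  have hA0 : 0 ≤ (1 + r) ^ α := Real.rpow_nonneg (by linarith) _
  have hB0 : 0 ≤ (1 + s) ^ β := Real.rpow_nonneg (by linarith) _
  have hAB := mul_le_mul hA hB hB0 (hA0.trans hA)
  have hcube : ∀ {r : ℝ}, |r| ≤ R → |r| ^ 3 ≤ R ^ 3 := fun h => by gcongr
  have hX : ∀ {α r : ℝ}, 0 < α → α < 1 → |r| ≤ R →
      |-(α * (1 - α) / 2 * r ^ 2) + |r| ^ 3| ≤ R ^ 2 + R ^ 3 := by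
    intro α r h0 h1 hr
    have hr2 : r ^ 2 ≤ R ^ 2 := by rw [← sq_abs]; gcongr
    obtain ⟨hc0, hc1⟩ := hc h0 h1
    have := hcube hr
    have := mul_le_mul hc1 hr2 (sq_nonneg r) zero_le_one
    have := mul_nonneg hc0 (sq_nonneg r)
    have := pow_nonneg (abs_nonneg r) 3
    rw [abs_le]
    constructor <;> linarith [pow_nonneg hR0 3, pow_nonneg hR0 2]
  have hXr := hX hα hα1 hrR'
  have hXs := hX hβ hβ1 hsR'
  set X := -(α * (1 - α) / 2 * r ^ 2) + |r| ^ 3 with hXd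
  set Y := -(β * (1 - β) / 2 * s ^ 2) + |s| ^ 3 with hYd
  have t1 : α * r * Y ≤ R * (R ^ 2 + R ^ 3) := by
    refine (le_abs_self _).trans ?_
    rw [abs_mul, abs_mul, abs_of_pos hα]
    have : α * |r| ≤ 1 * R := by gcongr
    rw [one_mul] at this
    gcongr
  have t2 : β * s * X ≤ R * (R ^ 2 + R ^ 3) := by
    refine (le_abs_self _).trans ?_
    rw [abs_mul, abs_mul, abs_of_pos hβ]
    have : β * |s| ≤ 1 * R := by gcongr
    rw [one_mul] at this
    gcongr
  have t3 : X * Y ≤ (R ^ 2 + R ^ 3) * (R ^ 2 + R ^ 3) := by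
    refine (le_abs_self _).trans ?_
    rw [abs_mul]
    gcongr
  have hexp : (1 + α * r - α * (1 - α) / 2 * r ^ 2 + |r| ^ 3) *
      (1 + β * s - β * (1 - β) / 2 * s ^ 2 + |s| ^ 3) =
      1 + α * r + β * s + (α * β * (r * s) - α * (1 - α) / 2 * (r * r)
        - β * (1 - β) / 2 * (s * s)) + |r| ^ 3 + |s| ^ 3
        + α * r * Y + β * s * X + X * Y := by
    rw [hXd, hYd]; ring
  have u1 : α * β * (r * s - h ^ 2 * (p * p')) ≤ 3 * Z := by
    have hZ0 : 0 ≤ Z := by positivity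
    linarith [mul_le_mul_of_nonneg_left q1.2 hab0, mul_le_mul_of_nonneg_right hab hZ0]
  have u : ∀ {α r p : ℝ}, 0 < α → α < 1 → -(3 * Z) ≤ r * r - h ^ 2 * (p * p) →
      -(α * (1 - α) / 2 * (r * r - h ^ 2 * (p * p))) ≤ 3 * Z := by
    intro α r p h0 h1 hq
    obtain ⟨hc0, hc1⟩ := hc h0 h1
    have hZ0 : 0 ≤ Z := by positivity
    linarith [mul_le_mul_of_nonneg_left hq hc0, mul_le_mul_of_nonneg_right hc1 hZ0]
  have u2 := u hα hα1 q2.1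
  have u3 := u hβ hβ1 q3.1
  have c1 := hcube hrR'
  have c2 := hcube hsR'
  have hZ700 : 700 * D ^ 6 * h ^ 3 * T ^ 12 = 700 * Z := by rw [hZ]; ring
  rw [hexp] at hAB
  rw [hZ700]
  linarith

section Average

variable {E W : Type*} [NormedAddCommGroup E] [NormedSpace ℝ E]
  [NormedAddCommGroup W] [NormedSpace ℝ W]

/-- A function with values in `[a, b]` that is approximated by an affine function to second order
at every point, with uniform constant `K`. -/
def IsTame (a b K : ℝ) (f : E → ℝ) : Prop :=
  (∀ x, f x ∈ Icc a b) ∧ ∃ L : E → StrongDual ℝ E, Continuous L ∧ (∀ x, ‖L x‖ ≤ K) ∧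
    ∀ x v, |f (x + v) - f x - L x v| ≤ K * ‖v‖ ^ 2

lemma IsTame.continuous {a b K : ℝ} {f : E → ℝ} (hf : IsTame a b K f) : Continuous f := by
  obtain ⟨-, L, -, hL, hfL⟩ := hf
  rw [continuous_iff_continuousAt]
  intro x
  have h1 : ∀ v, |f (x + v) - f x| ≤ K * ‖v‖ ^ 2 + K * ‖v‖ := by
    intro v
    have h2 : |L x v| ≤ K * ‖v‖ := (L x).le_of_opNorm_le (hL x) v
    have h3 := abs_add_le (f (x + v) - f x - L x v) (L x v)
    rw [sub_add_cancel] at h3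
    linarith [hfL x v]
  have h2 : Tendsto (fun y => K * ‖y - x‖ ^ 2 + K * ‖y - x‖) (𝓝 x) (𝓝 0) := by
    have : Continuous (fun y => K * ‖y - x‖ ^ 2 + K * ‖y - x‖) := by fun_prop
    simpa using this.tendsto x
  rw [ContinuousAt, tendsto_iff_norm_sub_tendsto_zero]
  refine squeeze_zero (fun _ => norm_nonneg _) (fun y => ?_) h2
  simpa using h1 (y - x)

lemma integrable_of_continuous_of_mem_Icc {Ω : Type*} [TopologicalSpace Ω] [MeasurableSpace Ω]
    [OpensMeasurableSpace Ω] {ν : Measure Ω} [IsFiniteMeasure ν] {a b : ℝ}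
    {f : Ω → ℝ} (hf : Continuous f) (hab : ∀ x, f x ∈ Icc a b) : Integrable f ν :=
  .of_mem_Icc a b hf.measurable.aemeasurable (.of_forall hab)

lemma integral_mem_Icc {Ω : Type*} [MeasurableSpace Ω] {ν : Measure Ω} [IsProbabilityMeasure ν]
    {a b : ℝ} {f : Ω → ℝ} (hf : Integrable f ν) (hab : ∀ x, f x ∈ Icc a b) :
    ∫ w, f w ∂ν ∈ Icc a b := by
  constructor
  · simpa using integral_mono (integrable_const a) hf fun x => (hab x).1
  · simpa using integral_mono hf (integrable_const b) fun x => (hab x).2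

variable [MeasurableSpace W] [BorelSpace W] [SecondCountableTopology W]

lemma integrable_one_add_norm_pow [CompleteSpace W] (ν : Measure W) [IsGaussian ν] (k : ℕ) :
    Integrable (fun w => (1 + ‖w‖) ^ k) ν := by
  have h : MemLp (fun w : W => 1 + ‖w‖) (k : ENNReal) ν :=
    (memLp_const (1 : ℝ)).add (IsGaussian.memLp_id ν (k : ENNReal) (ENNReal.natCast_ne_top k)).norm
  refine (h.integrable_norm_pow').congr (.of_forall fun w => ?_)
  simp only [Real.norm_eq_abs]
  rw [abs_of_nonneg (by positivity)]

/-- Averages of tame functions are tame, with the same constants. -/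
lemma IsTame.average {ν : Measure W} [IsProbabilityMeasure ν] {a b K : ℝ} {f : E → ℝ}
    (hf : IsTame a b K f) (A : W →L[ℝ] E) :
    IsTame a b K (fun x => ∫ w, f (x + A w) ∂ν) := by
  have hfc := hf.continuous
  obtain ⟨hab, L, hLc, hL, hfL⟩ := hf
  have hi : ∀ x, Integrable (fun w => f (x + A w)) ν := fun x =>
    integrable_of_continuous_of_mem_Icc (by fun_prop) fun w => hab _
  have hiL : ∀ x, Integrable (fun w => L (x + A w)) ν := fun x =>
    .of_bound (Continuous.aestronglyMeasurable (by fun_prop)) K (.of_forall fun w => hL _)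
  refine ⟨fun x => integral_mem_Icc (hi x) fun w => hab _,
    fun x => ∫ w, L (x + A w) ∂ν, ?_, fun x => ?_, fun x v => ?_⟩
  · refine continuous_of_dominated (bound := fun _ => K)
      (fun x => (hiL x).aestronglyMeasurable) (fun x => .of_forall fun w => hL _)
      (integrable_const _) (.of_forall fun w => by fun_prop)
  · simpa using norm_integral_le_of_norm_le_const (μ := ν) (.of_forall fun w => hL (x + A w))
  · have hi' : Integrable (fun w => f (x + v + A w) - f (x + A w)) ν := (hi _).sub (hi _)
    rw [ContinuousLinearMap.integral_apply (hiL x), ← integral_sub (hi _) (hi _),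
      ← integral_sub hi' ((hiL x).apply_continuousLinearMap v)]
    have := norm_integral_le_of_norm_le_const (μ := ν)
      (f := fun w => f (x + v + A w) - f (x + A w) - L (x + A w) v) (C := K * ‖v‖ ^ 2)
      (.of_forall fun w => by
        rw [add_right_comm]
        exact hfL _ _)
    simpa using this

/-- Linearisation of a tame function around its average. -/
lemma IsTame.abs_sub_average_le [CompleteSpace W] {ν : Measure W} [IsGaussian ν] {a b K : ℝ}
    {f : E → ℝ} (hf : IsTame a b K f) (hK : 0 ≤ K) (A : W →L[ℝ] E) (hA : ∀ w, ‖A w‖ ≤ 2 * ‖w‖)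
    (hA0 : ∀ ℓ : StrongDual ℝ E, ∫ w, ℓ (A w) ∂ν = 0) (x : E) (h : ℝ) :
    ∃ ℓ : StrongDual ℝ E, ‖ℓ‖ ≤ K ∧ ∀ w,
      |f (x + h • A w) - ∫ w', f (x + h • A w') ∂ν - h * ℓ (A w)| ≤
        4 * K * (1 + ∫ w', (1 + ‖w'‖) ^ 2 ∂ν) * h ^ 2 * (1 + ‖w‖) ^ 2 := by
  have hfc := hf.continuous
  obtain ⟨hab, L, hLc, hL, hfL⟩ := hf
  refine ⟨L x, hL x, fun w => ?_⟩
  have hi : Integrable (fun w => f (x + h • A w)) ν :=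
    integrable_of_continuous_of_mem_Icc (by fun_prop) fun w => hab _
  have hiL : Integrable (fun w => h * L x (A w)) ν :=
    (IsGaussian.integrable_dual ν ((L x).comp A)).const_mul h
  have he : ∀ w, |f (x + h • A w) - f x - h * L x (A w)| ≤
      4 * K * h ^ 2 * (1 + ‖w‖) ^ 2 := by
    intro w
    have h1 := hfL x (h • A w)
    rw [map_smul, smul_eq_mul, norm_smul, mul_pow, Real.norm_eq_abs, sq_abs] at h1
    refine h1.trans ?_
    have h2 : ‖A w‖ ≤ 2 * (1 + ‖w‖) := by linarith [hA w]
    calc K * (h ^ 2 * ‖A w‖ ^ 2) ≤ K * (h ^ 2 * (2 * (1 + ‖w‖)) ^ 2) := by gcongr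
      _ = _ := by ring
  have hm : |∫ w', f (x + h • A w') ∂ν - f x| ≤
      4 * K * h ^ 2 * ∫ w', (1 + ‖w'‖) ^ 2 ∂ν := by
    have e1 : ∫ w', f (x + h • A w') ∂ν - f x =
        ∫ w', (f (x + h • A w') - f x - h * L x (A w')) ∂ν := by
      have hi' : Integrable (fun w => f (x + h • A w) - f x) ν := hi.sub (integrable_const _)
      rw [integral_sub hi' hiL, integral_sub hi (integrable_const _),
        integral_const_mul, hA0]
      simp
    rw [e1, ← integral_const_mul]
    exact norm_integral_le_of_norm_le
      (f := fun w => f (x + h • A w) - f x - h * L x (A w)) ((integrable_one_add_norm_pow ν 2).const_mul _)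
      (.of_forall he)
  set m := ∫ w', f (x + h • A w') ∂ν
  set M := ∫ w', (1 + ‖w'‖) ^ 2 ∂ν
  have hM : 0 ≤ M := integral_nonneg fun _ => by positivity
  have h1 : |f (x + h • A w) - m - h * L x (A w)| ≤
      |f (x + h • A w) - f x - h * L x (A w)| + |m - f x| := by
    rw [← abs_neg (m - f x)]
    refine le_trans (le_of_eq ?_) (abs_add_le _ _)
    congr 1; ring
  have h2 : M ≤ M * (1 + ‖w‖) ^ 2 := by
    have : 1 ≤ (1 + ‖w‖) ^ 2 := one_le_pow₀ (by linarith [norm_nonneg w])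
    nlinarith
  calc _ ≤ _ := h1
    _ ≤ 4 * K * h ^ 2 * (1 + ‖w‖) ^ 2 + 4 * K * h ^ 2 * (M * (1 + ‖w‖) ^ 2) :=
        add_le_add (he w) (hm.trans (by gcongr))
    _ = _ := by ring

/-- The infinitesimal two-function inequality, with a cubic error term. -/
lemma exists_integral_rpow_mul_rpow_le_add [CompleteSpace W] (ν : Measure W) [IsGaussian ν]
    (A B : W →L[ℝ] E) (hA : ∀ w, ‖A w‖ ≤ 2 * ‖w‖) (hB : ∀ w, ‖B w‖ ≤ 2 * ‖w‖)
    (hA0 : ∀ ℓ : StrongDual ℝ E, ∫ w, ℓ (A w) ∂ν = 0)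
    (hB0 : ∀ ℓ : StrongDual ℝ E, ∫ w, ℓ (B w) ∂ν = 0)
    {α β : ℝ} (hα : 0 < α) (hα1 : α < 1) (hβ : 0 < β) (hβ1 : β < 1)
    (hAB : ∀ ℓ l : StrongDual ℝ E, ∫ w, (α * β * (ℓ (A w) * l (B w))
      - α * (1 - α) / 2 * ℓ (A w) ^ 2 - β * (1 - β) / 2 * l (B w) ^ 2) ∂ν ≤ 0)
    {a b K : ℝ} (ha : 0 < a) (hK : 0 ≤ K) :
    ∃ M, ∀ h ∈ Icc (0 : ℝ) 1, ∀ f g : E → ℝ, IsTame a b K f → IsTame a b K g → ∀ x y,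
      ∫ w, f (x + h • A w) ^ α * g (y + h • B w) ^ β ∂ν ≤
        (∫ w, f (x + h • A w) ∂ν) ^ α * (∫ w, g (y + h • B w) ∂ν) ^ β + M * h ^ 3 := by
  set M₂ := ∫ w, (1 + ‖w‖) ^ 2 ∂ν with hM₂
  set D := 1 + 4 * K * (1 + M₂) / a with hD
  have hM₂0 : 0 ≤ M₂ := integral_nonneg fun _ => by positivity
  have hD1 : 1 ≤ D := by
    have : 0 ≤ 4 * K * (1 + M₂) / a := by positivity
    linarith
  refine ⟨b ^ α * b ^ β * (700 * D ^ 6 * ∫ w, (1 + ‖w‖) ^ 12 ∂ν), ?_⟩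
  rintro h ⟨hh0, hh1⟩ f g hf hg x y
  have key : ∀ (f : E → ℝ), IsTame a b K f → ∀ A : W →L[ℝ] E, (∀ w, ‖A w‖ ≤ 2 * ‖w‖) →
      (∀ ℓ : StrongDual ℝ E, ∫ w, ℓ (A w) ∂ν = 0) → ∀ x, ∃ ℓ : StrongDual ℝ E, ∃ r e : W → ℝ,
      (∀ w, f (x + h • A w) = (∫ w', f (x + h • A w') ∂ν) * (1 + r w)) ∧
      (∀ w, -1 < r w) ∧ (∀ w, r w = h * ℓ (A w) + e w) ∧ (∀ w, |ℓ (A w)| ≤ D * (1 + ‖w‖)) ∧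
      (∀ w, |e w| ≤ D * h ^ 2 * (1 + ‖w‖) ^ 2) ∧ Integrable r ν ∧ ∫ w, r w ∂ν = 0 := by
    intro f hf A hA hA0 x
    obtain ⟨ℓ, hℓ, hbd⟩ := hf.abs_sub_average_le (ν := ν) hK A hA hA0 x h
    have hi : Integrable (fun w => f (x + h • A w)) ν :=
      integrable_of_continuous_of_mem_Icc
        (hf.continuous.comp (by fun_prop)) fun w => hf.1 _
    have hm := integral_mem_Icc hi fun w => hf.1 _
    set m := ∫ w', f (x + h • A w') ∂ν with hmd
    have hm0 : 0 < m := ha.trans_le hm.1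
    refine ⟨m⁻¹ • ℓ, fun w => f (x + h • A w) / m - 1,
      fun w => (f (x + h • A w) - m - h * ℓ (A w)) / m, fun w => ?_, fun w => ?_, fun w => ?_,
      fun w => ?_, fun w => ?_, (hi.div_const m).sub (integrable_const _), ?_⟩
    · field_simp; ring
    · have : 0 < f (x + h • A w) / m := div_pos (ha.trans_le (hf.1 _).1) hm0
      linarith
    · simp only [smul_apply, smul_eq_mul]
      field_simp; ring
    · have h1 : |ℓ (A w)| ≤ K * (2 * (1 + ‖w‖)) := by
        refine (ℓ.le_of_opNorm_le hℓ (A w)).trans ?_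
        have := hA w
        gcongr
        linarith
      simp only [smul_apply, smul_eq_mul]
      rw [abs_mul, abs_of_pos (inv_pos.2 hm0)]
      calc m⁻¹ * |ℓ (A w)| ≤ a⁻¹ * (K * (2 * (1 + ‖w‖))) := by
            have := hm.1
            gcongr
        _ = (2 * K * 1 / a) * (1 + ‖w‖) := by field_simp
        _ ≤ (4 * K * (1 + M₂) / a) * (1 + ‖w‖) := by gcongr <;> linarith
        _ ≤ _ := by gcongr; linarith
    · rw [abs_div, abs_of_pos hm0]
      have := hm.1
      calc _ ≤ 4 * K * (1 + M₂) * h ^ 2 * (1 + ‖w‖) ^ 2 / a := by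
            have := hbd w
            gcongr
        _ = (4 * K * (1 + M₂) / a) * h ^ 2 * (1 + ‖w‖) ^ 2 := by ring
        _ ≤ _ := by gcongr; linarith
    · rw [integral_sub (hi.div_const m) (integrable_const _), integral_div, ← hmd, div_self hm0.ne']
      simp
  have hfm := integral_mem_Icc (integrable_of_continuous_of_mem_Icc (ν := ν)
    (hf.continuous.comp (by fun_prop : Continuous fun w => x + h • A w)) fun w => hf.1 _)
    fun w => hf.1 _
  have hgm := integral_mem_Icc (integrable_of_continuous_of_mem_Icc (ν := ν)
    (hg.continuous.comp (by fun_prop : Continuous fun w => y + h • B w)) fun w => hg.1 _)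
    fun w => hg.1 _
  obtain ⟨ℓ, r, e, hr, hr1, hre, hℓ, he, hri, hr0⟩ := key f hf A hA hA0 x
  obtain ⟨l, s, e', hs, hs1, hse, hl, he', hsi, hs0⟩ := key g hg B hB hB0 y
  simp only [Function.comp_def] at hfm hgm
  set m := ∫ w', f (x + h • A w') ∂ν
  set k := ∫ w', g (y + h • B w') ∂ν
  have hm0 : 0 < m := ha.trans_le hfm.1
  have hk0 : 0 < k := ha.trans_le hgm.1
  have hmA : MemLp (fun w => ℓ (A w)) 2 ν := IsGaussian.memLp_dual ν (ℓ.comp A) 2 (by simp)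
  have hmB : MemLp (fun w => l (B w)) 2 ν := IsGaussian.memLp_dual ν (l.comp B) 2 (by simp)
  have hqi : Integrable (fun w => α * β * (ℓ (A w) * l (B w))
      - α * (1 - α) / 2 * ℓ (A w) ^ 2 - β * (1 - β) / 2 * l (B w) ^ 2) ν :=
    (((hmA.integrable_mul hmB).const_mul _).sub (hmA.integrable_sq.const_mul _)).sub
      (hmB.integrable_sq.const_mul _)
  have hTi := integrable_one_add_norm_pow ν 12
  have hbound : ∫ w, (1 + r w) ^ α * (1 + s w) ^ β ∂ν ≤
      1 + 700 * D ^ 6 * h ^ 3 * ∫ w, (1 + ‖w‖) ^ 12 ∂ν := by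
    have hi1 : Integrable (fun w => 1 + α * r w) ν := (integrable_const 1).add (hri.const_mul α)
    have hi2 : Integrable (fun w => 1 + α * r w + β * s w) ν := hi1.add (hsi.const_mul β)
    have hi3 : Integrable (fun w => 1 + α * r w + β * s w + h ^ 2 * (α * β * (ℓ (A w) * l (B w))
        - α * (1 - α) / 2 * ℓ (A w) ^ 2 - β * (1 - β) / 2 * l (B w) ^ 2)) ν :=
      hi2.add (hqi.const_mul (h ^ 2))
    have hi4 := hi3.add (hTi.const_mul (700 * D ^ 6 * h ^ 3))
    calc _ ≤ ∫ w, (1 + α * r w + β * s w + h ^ 2 * (α * β * (ℓ (A w) * l (B w))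
          - α * (1 - α) / 2 * ℓ (A w) ^ 2 - β * (1 - β) / 2 * l (B w) ^ 2)
          + 700 * D ^ 6 * h ^ 3 * (1 + ‖w‖) ^ 12) ∂ν := by
          refine integral_mono_of_nonneg (.of_forall fun w => ?_) hi4 (.of_forall fun w => ?_)
          · exact mul_nonneg (Real.rpow_nonneg (by linarith [hr1 w]) _)
              (Real.rpow_nonneg (by linarith [hs1 w]) _)
          · exact one_add_rpow_mul_one_add_rpow_le hα hα1 hβ hβ1 (hr1 w) (hs1 w) hh0 hh1 hD1
              (by linarith [norm_nonneg w]) (hre w) (hse w) (hℓ w) (hl w) (he w) (he' w)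
      _ = 1 + h ^ 2 * ∫ w, (α * β * (ℓ (A w) * l (B w))
          - α * (1 - α) / 2 * ℓ (A w) ^ 2 - β * (1 - β) / 2 * l (B w) ^ 2) ∂ν
          + 700 * D ^ 6 * h ^ 3 * ∫ w, (1 + ‖w‖) ^ 12 ∂ν := by
          rw [integral_add hi3 (hTi.const_mul _), integral_add hi2 (hqi.const_mul _),
            integral_add hi1 (hsi.const_mul β), integral_add (integrable_const 1) (hri.const_mul α),
            integral_const_mul, integral_const_mul, integral_const_mul, integral_const_mul, hr0, hs0]
          simp
      _ ≤ _ := by nlinarith [mul_nonpos_of_nonneg_of_nonpos (sq_nonneg h) (hAB ℓ l)]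
  have hfac : ∀ w, f (x + h • A w) ^ α * g (y + h • B w) ^ β =
      m ^ α * k ^ β * ((1 + r w) ^ α * (1 + s w) ^ β) := by
    intro w
    rw [hr, hs, Real.mul_rpow hm0.le (by linarith [hr1 w]),
      Real.mul_rpow hk0.le (by linarith [hs1 w])]
    ring
  simp_rw [hfac]
  rw [integral_const_mul]
  have hT0 : 0 ≤ ∫ w, (1 + ‖w‖) ^ 12 ∂ν := integral_nonneg fun _ => by positivity
  have hmb : m ^ α * k ^ β ≤ b ^ α * b ^ β := by
    have := Real.rpow_le_rpow hm0.le hfm.2 hα.le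
    have := Real.rpow_le_rpow hk0.le hgm.2 hβ.le
    gcongr
    exact Real.rpow_nonneg (hm0.le.trans hfm.2) _
  calc _ ≤ m ^ α * k ^ β * (1 + 700 * D ^ 6 * h ^ 3 * ∫ w, (1 + ‖w‖) ^ 12 ∂ν) := by gcongr
    _ = m ^ α * k ^ β + m ^ α * k ^ β * (700 * D ^ 6 * h ^ 3 * ∫ w, (1 + ‖w‖) ^ 12 ∂ν) := by ring
    _ ≤ m ^ α * k ^ β + b ^ α * b ^ β * (700 * D ^ 6 * h ^ 3 * ∫ w, (1 + ‖w‖) ^ 12 ∂ν) := by gcongr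
    _ = _ := by ring

end Average

section Gaussian

variable {E W : Type*} [NormedAddCommGroup E] [NormedSpace ℝ E]
  [NormedAddCommGroup W] [NormedSpace ℝ W] [MeasurableSpace W] [BorelSpace W]
  [SecondCountableTopology W] [CompleteSpace W]

lemma measurePreserving_cos_smul_add_sin_smul {μ : Measure W} [IsGaussian μ]
    (hμ : ∫ x, x ∂μ = 0) (θ : ℝ) :
    MeasurePreserving (fun p : W × W => cos θ • p.1 + sin θ • p.2) (μ.prod μ) μ := by
  have h1 : MeasurePreserving (ContinuousLinearMap.rotation θ : W × W →L[ℝ] W × W)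
      (μ.prod μ) (μ.prod μ) :=
    ⟨(ContinuousLinearMap.rotation θ : W × W →L[ℝ] W × W).measurable,
      IsGaussian.map_rotation_eq_self hμ θ⟩
  exact measurePreserving_fst.comp h1

lemma exists_eq_norm_mul_cos_sin (a b : ℝ) :
    ∃ θ, a = √(a ^ 2 + b ^ 2) * cos θ ∧ b = √(a ^ 2 + b ^ 2) * sin θ := by
  refine ⟨Complex.arg ⟨a, b⟩, ?_, ?_⟩
  · have := Complex.norm_mul_cos_arg ⟨a, b⟩
    rw [Complex.norm_def, Complex.normSq_mk, ← sq, ← sq] at this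
    exact this.symm
  · have := Complex.norm_mul_sin_arg ⟨a, b⟩
    rw [Complex.norm_def, Complex.normSq_mk, ← sq, ← sq] at this
    exact this.symm

/-- Stability of centered Gaussian measures under sums of independent copies. -/
lemma integral_integral_smul_add_smul {μ : Measure W} [IsGaussian μ] (hμ : ∫ x, x ∂μ = 0)
    {Φ : W → ℝ} (hΦ : Continuous Φ) {a b : ℝ} (hab : ∀ w, Φ w ∈ Icc a b) (c d : ℝ) :
    ∫ w, ∫ w', Φ (c • w + d • w') ∂μ ∂μ = ∫ w, Φ (√(c ^ 2 + d ^ 2) • w) ∂μ := by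
  obtain ⟨θ, hc, hd⟩ := exists_eq_norm_mul_cos_sin c d
  set t := √(c ^ 2 + d ^ 2)
  have h1 : Integrable (fun p : W × W => Φ (c • p.1 + d • p.2)) (μ.prod μ) :=
    integrable_of_continuous_of_mem_Icc (by fun_prop) fun p => hab _
  rw [← integral_prod (fun p : W × W => Φ (c • p.1 + d • p.2)) h1]
  have hmp := measurePreserving_cos_smul_add_sin_smul hμ θ
  have h2 := integral_map (μ := μ.prod μ) hmp.measurable.aemeasurable (f := fun w => Φ (t • w))
    (Continuous.aestronglyMeasurable (by fun_prop))
  rw [hmp.map_eq] at h2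
  rw [h2]
  refine integral_congr_ae (.of_forall fun p => ?_)
  simp only [smul_add, smul_smul]
  rw [← hc, ← hd]

lemma IsTame.rpow_mul_rpow_mem_Icc {a b K : ℝ} (ha : 0 < a) {f g : E → ℝ} (hf : IsTame a b K f)
    (hg : IsTame a b K g) {α β : ℝ} (hα : 0 < α) (hβ : 0 < β) (x y : E) :
    f x ^ α * g y ^ β ∈ Icc 0 (b ^ α * b ^ β) := by
  have hfx := ha.trans_le (hf.1 x).1
  have hgy := ha.trans_le (hg.1 y).1
  have h1 := Real.rpow_le_rpow hfx.le (hf.1 x).2 hα.le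
  have h2 := Real.rpow_le_rpow hgy.le (hg.1 y).2 hβ.le
  refine ⟨by positivity, mul_le_mul h1 h2 (by positivity) ?_⟩
  exact Real.rpow_nonneg (hfx.le.trans (hf.1 x).2) _

/-- The two-function inequality for a centered Gaussian vector `w` and its linear images
`A w`, `B w`, obtained by adding up small independent increments. -/
lemma integral_rpow_mul_rpow_le_of_isTame {ν : Measure W} [IsGaussian ν] (hν : ∫ w, w ∂ν = 0)
    (A B : W →L[ℝ] E) (hA : ∀ w, ‖A w‖ ≤ 2 * ‖w‖) (hB : ∀ w, ‖B w‖ ≤ 2 * ‖w‖)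
    {α β : ℝ} (hα : 0 < α) (hα1 : α < 1) (hβ : 0 < β) (hβ1 : β < 1)
    (hAB : ∀ ℓ l : StrongDual ℝ E, ∫ w, (α * β * (ℓ (A w) * l (B w))
      - α * (1 - α) / 2 * ℓ (A w) ^ 2 - β * (1 - β) / 2 * l (B w) ^ 2) ∂ν ≤ 0)
    {a b K : ℝ} (ha : 0 < a) (hK : 0 ≤ K) {f g : E → ℝ} (hf : IsTame a b K f)
    (hg : IsTame a b K g) :
    ∫ w, f (A w) ^ α * g (B w) ^ β ∂ν ≤ (∫ w, f (A w) ∂ν) ^ α * (∫ w, g (B w) ∂ν) ^ β := by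
  have hzero : ∀ (A : W →L[ℝ] E) (ℓ : StrongDual ℝ E), ∫ w, ℓ (A w) ∂ν = 0 := by
    intro A ℓ
    have := IsGaussian.integral_dual (μ := ν) (ℓ.comp A)
    rw [hν, map_zero] at this
    exact this
  obtain ⟨M, hM⟩ := exists_integral_rpow_mul_rpow_le_add ν A B hA hB (hzero A) (hzero B) hα hα1
    hβ hβ1 hAB (b := b) ha hK
  have hcont : ∀ {f g : E → ℝ}, IsTame a b K f → IsTame a b K g → ∀ x y,
      Continuous fun w => f (x + A w) ^ α * g (y + B w) ^ β := by
    intro f g hf hg x y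
    have hfc := hf.continuous
    have hgc := hg.continuous
    exact ((by fun_prop : Continuous fun w => f (x + A w)).rpow_const fun _ => Or.inr hα.le).mul
      ((by fun_prop : Continuous fun w => g (y + B w)).rpow_const fun _ => Or.inr hβ.le)
  have iter : ∀ (N : ℕ), ∀ h ∈ Icc (0 : ℝ) 1, ∀ f g : E → ℝ, IsTame a b K f → IsTame a b K g →
      ∀ x y, ∫ w, f (x + A ((√N * h) • w)) ^ α * g (y + B ((√N * h) • w)) ^ β ∂ν ≤
        (∫ w, f (x + A ((√N * h) • w)) ∂ν) ^ α * (∫ w, g (y + B ((√N * h) • w)) ∂ν) ^ β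
          + N * (M * h ^ 3) := by
    intro N
    induction N with
    | zero => intro h _ f g _ _ x y; simp
    | succ N ih =>
      intro h hh f g hf hg x y
      have hsq : √((√N * h) ^ 2 + h ^ 2) = √((N + 1 : ℕ) : ℝ) * h := by
        rw [mul_pow, Real.sq_sqrt (by positivity), ← add_one_mul, Real.sqrt_mul (by positivity),
          Real.sqrt_sq hh.1]
        push_cast; rfl
      have hf' := hf.average (ν := ν) (h • A)
      have hg' := hg.average (ν := ν) (h • B)
      set f' : E → ℝ := fun x => ∫ w, f (x + (h • A) w) ∂ν with hf'd
      set g' : E → ℝ := fun x => ∫ w, g (x + (h • B) w) ∂ν with hg'd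
      have hsplit : ∀ {f : E → ℝ}, IsTame a b K f → ∀ (A : W →L[ℝ] E) (x : E),
          ∫ w, f (x + A ((√(N + 1 : ℕ) * h) • w)) ∂ν =
            ∫ w, ∫ w', f (x + A ((√N * h) • w) + (h • A) w') ∂ν ∂ν := by
        intro f hf A x
        have hfc := hf.continuous
        rw [← hsq, ← integral_integral_smul_add_smul hν (Φ := fun w => f (x + A w))
          (by fun_prop) fun w => hf.1 _]
        simp [add_assoc]
      have hst := hM h hh f g hf hg
      have e1 : ∫ w, f (x + A ((√(N + 1 : ℕ) * h) • w)) ^ α *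
          g (y + B ((√(N + 1 : ℕ) * h) • w)) ^ β ∂ν =
          ∫ w, ∫ w', f (x + A ((√N * h) • w) + h • A w') ^ α *
            g (y + B ((√N * h) • w) + h • B w') ^ β ∂ν ∂ν := by
        rw [← hsq, ← integral_integral_smul_add_smul hν (hcont hf hg x y)
          fun w => hf.rpow_mul_rpow_mem_Icc ha hg hα hβ _ _]
        simp [add_assoc]
      have hintegr : Integrable (fun w => f' (x + A ((√N * h) • w)) ^ α *
          g' (y + B ((√N * h) • w)) ^ β) ν :=
        integrable_of_continuous_of_mem_Icc
          ((hcont hf' hg' x y).comp (by fun_prop : Continuous fun w : W => (√N * h) • w))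
          fun w => hf'.rpow_mul_rpow_mem_Icc ha hg' hα hβ _ _
      rw [e1, hsplit hf A x, hsplit hg B y]
      calc _ ≤ ∫ w, (f' (x + A ((√N * h) • w)) ^ α * g' (y + B ((√N * h) • w)) ^ β
            + M * h ^ 3) ∂ν := by
            refine integral_mono_of_nonneg (.of_forall fun w => ?_)
              (hintegr.add (integrable_const _)) (.of_forall fun w => hst _ _)
            exact integral_nonneg fun w' => (hf.rpow_mul_rpow_mem_Icc ha hg hα hβ _ _).1
        _ = ∫ w, f' (x + A ((√N * h) • w)) ^ α * g' (y + B ((√N * h) • w)) ^ β ∂ν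
            + M * h ^ 3 := by
            rw [integral_add hintegr (integrable_const _)]
            simp
        _ ≤ _ := by
            have := ih h hh f' g' hf' hg' x y
            refine (add_le_add_left this (M * h ^ 3)).trans (le_of_eq ?_)
            rw [add_assoc]
            congr 1
            push_cast
            ring
  have hlim : Tendsto (fun N : ℕ => (∫ w, f (A w) ∂ν) ^ α * (∫ w, g (B w) ∂ν) ^ β
      + M * (√((N + 1 : ℕ) : ℝ))⁻¹) atTop
      (𝓝 ((∫ w, f (A w) ∂ν) ^ α * (∫ w, g (B w) ∂ν) ^ β + M * 0)) := by
    refine tendsto_const_nhds.add (Tendsto.const_mul M ?_)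
    exact tendsto_inv_atTop_zero.comp (Real.tendsto_sqrt_atTop.comp
      (tendsto_natCast_atTop_atTop.comp (tendsto_add_atTop_nat 1)))
  rw [mul_zero, add_zero] at hlim
  refine ge_of_tendsto' hlim fun N => ?_
  have hN : (1 : ℝ) ≤ √((N + 1 : ℕ) : ℝ) := by
    rw [Real.one_le_sqrt]
    push_cast
    linarith [(Nat.cast_nonneg N : (0 : ℝ) ≤ N)]
  have hN0 : √((N + 1 : ℕ) : ℝ) ≠ 0 := by positivity
  have := iter (N + 1) (√((N + 1 : ℕ) : ℝ))⁻¹ ⟨by positivity, inv_le_one_of_one_le₀ hN⟩ f g hf hg 0 0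
  rw [mul_inv_cancel₀ hN0] at this
  simp only [one_smul, zero_add] at this
  refine this.trans (le_of_eq ?_)
  congr 1
  have h2 : ((N + 1 : ℕ) : ℝ) = √((N + 1 : ℕ) : ℝ) ^ 2 := (Real.sq_sqrt (by positivity)).symm
  nth_rewrite 1 [h2]
  field_simp

/-- The two-function Gaussian hypercontractive inequality for tame functions. -/
lemma integral_prod_rpow_mul_rpow_le_of_isTame {μ : Measure W} [IsGaussian μ]
    (hμ : ∫ x, x ∂μ = 0) {α β : ℝ} (hα : 0 < α) (hα1 : α < 1) (hβ : 0 < β) (hβ1 : β < 1)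
    (θ : ℝ) (hθ : cos θ ^ 2 * (α * β) ≤ (1 - α) * (1 - β))
    {a b K : ℝ} (ha : 0 < a) (hK : 0 ≤ K) {f g : W → ℝ} (hf : IsTame a b K f)
    (hg : IsTame a b K g) :
    ∫ p : W × W, f (cos θ • p.1 + sin θ • p.2) ^ α * g p.1 ^ β ∂(μ.prod μ) ≤
      (∫ x, f x ∂μ) ^ α * (∫ x, g x ∂μ) ^ β := by
  set A : W × W →L[ℝ] W := cos θ • ContinuousLinearMap.fst ℝ W W +
    sin θ • ContinuousLinearMap.snd ℝ W W
  set B : W × W →L[ℝ] W := ContinuousLinearMap.fst ℝ W W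
  have hAp : ∀ p, A p = cos θ • p.1 + sin θ • p.2 := fun p => rfl
  have hBp : ∀ p, B p = p.1 := fun p => rfl
  have hmpA : MeasurePreserving A (μ.prod μ) μ := by
    have := measurePreserving_cos_smul_add_sin_smul hμ θ
    convert! this using 1
  have hmpB : MeasurePreserving B (μ.prod μ) μ := measurePreserving_fst
  have hintegr : ∀ {C : W × W →L[ℝ] W}, MeasurePreserving C (μ.prod μ) μ → ∀ {φ : W → ℝ},
      Continuous φ → ∫ p, φ (C p) ∂(μ.prod μ) = ∫ x, φ x ∂μ := by
    intro C hC φ hφ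
    have := integral_map (μ := μ.prod μ) hC.measurable.aemeasurable (f := φ)
      hφ.aestronglyMeasurable
    rw [hC.map_eq] at this
    exact this.symm
  have hν : ∫ p : W × W, p ∂(μ.prod μ) = 0 := by
    have hi : Integrable (fun p : W × W => p) (μ.prod μ) := IsGaussian.integrable_id
    refine Prod.ext ?_ ?_
    · rw [fst_integral hi, integral_fun_fst (f := fun x : W => x)]
      simp [hμ]
    · rw [snd_integral hi, integral_fun_snd (f := fun x : W => x)]
      simp [hμ]
  have hA2 : ∀ p, ‖A p‖ ≤ 2 * ‖p‖ := by
    intro p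
    rw [hAp]
    refine (norm_add_le _ _).trans ?_
    rw [norm_smul, norm_smul]
    have h1 := mul_le_mul (abs_cos_le_one θ) (norm_fst_le p) (norm_nonneg _) zero_le_one
    have h2 := mul_le_mul (abs_sin_le_one θ) (norm_snd_le p) (norm_nonneg _) zero_le_one
    simp only [Real.norm_eq_abs]
    linarith
  have hB2 : ∀ p, ‖B p‖ ≤ 2 * ‖p‖ := by
    intro p
    rw [hBp]
    linarith [norm_fst_le p, norm_nonneg p]
  have hAB : ∀ ℓ l : StrongDual ℝ W, ∫ w, (α * β * (ℓ (A w) * l (B w))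
      - α * (1 - α) / 2 * ℓ (A w) ^ 2 - β * (1 - β) / 2 * l (B w) ^ 2) ∂(μ.prod μ) ≤ 0 := by
    intro ℓ l
    have mA : MemLp (fun w => ℓ (A w)) 2 (μ.prod μ) :=
      IsGaussian.memLp_dual _ (ℓ.comp A) 2 (by simp)
    have mB : MemLp (fun w => l (B w)) 2 (μ.prod μ) :=
      IsGaussian.memLp_dual _ (l.comp B) 2 (by simp)
    have mℓ : MemLp (fun x => ℓ x) 2 μ := IsGaussian.memLp_dual _ ℓ 2 (by simp)
    have ml : MemLp (fun x => l x) 2 μ := IsGaussian.memLp_dual _ l 2 (by simp)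
    have i1 : Integrable (fun w => α * β * (ℓ (A w) * l (B w))) (μ.prod μ) :=
      (mA.integrable_mul mB).const_mul _
    have i2 : Integrable (fun w => α * (1 - α) / 2 * ℓ (A w) ^ 2) (μ.prod μ) :=
      mA.integrable_sq.const_mul _
    have i3 : Integrable (fun w => β * (1 - β) / 2 * l (B w) ^ 2) (μ.prod μ) :=
      mB.integrable_sq.const_mul _
    have i12 : Integrable (fun w => α * β * (ℓ (A w) * l (B w)) -
      α * (1 - α) / 2 * ℓ (A w) ^ 2) (μ.prod μ) := i1.sub i2
    have hcross : ∫ w, ℓ (A w) * l (B w) ∂(μ.prod μ) = cos θ * ∫ x, ℓ x * l x ∂μ := by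
      have h1 : ∀ w : W × W, ℓ (A w) * l (B w) =
          cos θ * (ℓ (B w) * l (B w)) + sin θ * (l w.1 * ℓ w.2) := by
        intro w
        simp only [hAp, hBp, map_add, map_smul, smul_eq_mul]
        ring
      have mB' : MemLp (fun w => ℓ (B w)) 2 (μ.prod μ) :=
        IsGaussian.memLp_dual _ (ℓ.comp B) 2 (by simp)
      have i4 : Integrable (fun w : W × W => l w.1 * ℓ w.2) (μ.prod μ) :=
        (IsGaussian.integrable_dual μ l).mul_prod (IsGaussian.integrable_dual μ ℓ)
      have i5 : Integrable (fun w => ℓ (B w) * l (B w)) (μ.prod μ) := mB'.integrable_mul mB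
      simp_rw [h1]
      rw [integral_add (i5.const_mul _) (i4.const_mul _), integral_const_mul, integral_const_mul,
        integral_prod_mul (fun x => l x) (fun x => ℓ x), IsGaussian.integral_dual, hμ, map_zero,
        hintegr hmpB (φ := fun x => ℓ x * l x) (by fun_prop)]
      simp
    have j1 : Integrable (fun x => α * β * (cos θ * (ℓ x * l x))) μ :=
      ((mℓ.integrable_mul ml).const_mul (cos θ)).const_mul (α * β)
    have j2 : Integrable (fun x => α * (1 - α) / 2 * ℓ x ^ 2) μ := mℓ.integrable_sq.const_mul _
    have j12 : Integrable (fun x => α * β * (cos θ * (ℓ x * l x)) -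
      α * (1 - α) / 2 * ℓ x ^ 2) μ := j1.sub j2
    rw [integral_sub i12 i3, integral_sub i1 i2, integral_const_mul, integral_const_mul,
      integral_const_mul, hcross, hintegr hmpA (φ := fun x => ℓ x ^ 2) (by fun_prop),
      hintegr hmpB (φ := fun x => l x ^ 2) (by fun_prop), ← integral_const_mul,
      ← integral_const_mul, ← integral_const_mul, ← integral_const_mul,
      ← integral_sub j1 j2, ← integral_sub j12 (ml.integrable_sq.const_mul _)]
    refine integral_nonpos fun x => ?_
    simp only [Pi.zero_apply]
    generalize ℓ x = P
    generalize l x = Q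
    have hc : 0 < α * (1 - α) := mul_pos hα (by linarith)
    have hdisc : (α * β * cos θ) ^ 2 ≤ α * (1 - α) * (β * (1 - β)) := by
      have := mul_le_mul_of_nonneg_left hθ (mul_pos hα hβ).le
      linarith
    have hsq := sq_nonneg (α * (1 - α) * P - α * β * cos θ * Q)
    have hQ := mul_nonneg (sub_nonneg.2 hdisc) (sq_nonneg Q)
    have : 0 ≤ (α * (1 - α)) * (α * (1 - α) * P ^ 2 + β * (1 - β) * Q ^ 2
        - 2 * (α * β * cos θ) * (P * Q)) := by linarith
    have := nonneg_of_mul_nonneg_right this hc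
    linarith
  have := integral_rpow_mul_rpow_le_of_isTame hν A B hA2 hB2 hα hα1 hβ hβ1 hAB ha hK hf hg
  rw [hintegr hmpA hf.continuous, hintegr hmpB hg.continuous] at this
  simpa only [hAp, hBp] using this

end Gaussian

section Approximation

variable {E : Type*} [NormedAddCommGroup E] [NormedSpace ℝ E]

lemma IsTame.mono {a b K K' : ℝ} {f : E → ℝ} (hf : IsTame a b K f) (hK : K ≤ K') :
    IsTame a b K' f := by
  obtain ⟨hab, L, hLc, hL, hfL⟩ := hf
  refine ⟨hab, L, hLc, fun x => (hL x).trans hK, fun x v => (hfL x v).trans ?_⟩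
  gcongr

lemma exists_isTame_const_add {φ : E → ℝ} (hφ : ContDiff ℝ 2 φ) (hφc : HasCompactSupport φ)
    {a b c : ℝ} (hab : ∀ x, c + φ x ∈ Icc a b) :
    ∃ K, 0 ≤ K ∧ IsTame a b K (fun x => c + φ x) := by
  have hdc : ContDiff ℝ 1 (fderiv ℝ φ) := hφ.fderiv_right (by norm_num)
  obtain ⟨K₁, hK₁⟩ := (hφc.fderiv ℝ).exists_bound_of_continuous hdc.continuous
  obtain ⟨K₂, hK₂⟩ := hdc.lipschitzWith_of_hasCompactSupport (hφc.fderiv ℝ) one_ne_zero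
  refine ⟨max K₁ K₂, K₂.2.trans (le_max_right _ _), hab, fderiv ℝ φ, hdc.continuous,
    fun x => (hK₁ x).trans (le_max_left _ _), fun x v => ?_⟩
  have hb : ∀ z ∈ segment ℝ x (x + v), ‖fderiv ℝ φ z - fderiv ℝ φ x‖ ≤ K₂ * ‖v‖ := by
    intro z hz
    refine (hK₂.norm_sub_le z x).trans ?_
    gcongr
    have := norm_sub_le_of_mem_segment hz
    simpa using this
  have h := (convex_segment x (x + v)).norm_image_sub_le_of_norm_hasFDerivWithin_le'
    (f := φ) (f' := fderiv ℝ φ) (φ := fderiv ℝ φ x)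
    (fun z _ => ((hφ.differentiable two_ne_zero) z).hasFDerivAt.hasFDerivWithinAt) hb
    (left_mem_segment ℝ _ _) (right_mem_segment ℝ _ _)
  rw [add_sub_cancel_left] at h
  rw [add_sub_add_left_eq_sub]
  refine h.trans ?_
  rw [mul_assoc, ← sq]
  gcongr
  exact le_max_right _ _

lemma exists_isTame_seq_tendsto_ae [FiniteDimensional ℝ E] [MeasurableSpace E] [BorelSpace E]
    (μ : Measure E) [IsFiniteMeasure μ] {F : E → ℝ} (hF : Measurable F) {a b : ℝ}
    (hab : ∀ x, F x ∈ Icc a b) :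
    ∃ G : ℕ → E → ℝ, (∀ k, ∃ K, 0 ≤ K ∧ IsTame a b K (G k)) ∧
      ∀ᵐ x ∂μ, Tendsto (fun k => G k x) atTop (𝓝 (F x)) := by
  set c := (a + b) / 2 with hc
  set d := (b - a) / 2 with hd
  have hd0 : 0 ≤ d := by
    have := (hab 0).1.trans (hab 0).2
    rw [hd]; linarith
  set h : E → ℝ := fun x => arcsin ((F x - c) / d) with hh
  have hFh : ∀ x, F x = c + d * sin (h x) := by
    intro x
    have h1 := (hab x).1
    have h2 := (hab x).2
    rcases hd0.eq_or_lt with h0 | h0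
    · rw [← h0]; linarith
    · rw [hh]
      dsimp only
      rw [sin_arcsin, mul_div_cancel₀ _ h0.ne', add_sub_cancel]
      · rw [le_div_iff₀ h0]; linarith
      · rw [div_le_iff₀ h0]; linarith
  have hhm : Measurable h := measurable_arcsin.comp ((hF.sub_const c).div_const d)
  have hmem : MemLp h 1 μ :=
    .of_bound hhm.aestronglyMeasurable (π / 2) (.of_forall fun x => by
      rw [Real.norm_eq_abs, abs_le]
      exact ⟨neg_pi_div_two_le_arcsin _, arcsin_le_pi_div_two _⟩)
  have hpos : ∀ k : ℕ, (0 : ℝ) < 1 / ((k : ℝ) + 1) := fun k => Nat.one_div_pos_of_nat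
  choose u hu1 hu2 hu3 using fun k : ℕ => hmem.exist_eLpNorm_sub_le (by simp) le_rfl (hpos k)
  have hmeas : TendstoInMeasure μ u atTop h := by
    refine tendstoInMeasure_of_tendsto_eLpNorm one_ne_zero
      (fun k => (hu2 k).continuous.aestronglyMeasurable) hhm.aestronglyMeasurable ?_
    refine tendsto_of_tendsto_of_tendsto_of_le_of_le tendsto_const_nhds
      (h := fun k : ℕ => ENNReal.ofReal (1 / ((k : ℝ) + 1))) ?_ (fun _ => zero_le) fun k => ?_
    · rw [← ENNReal.ofReal_zero]
      exact ENNReal.tendsto_ofReal tendsto_one_div_add_atTop_nhds_zero_nat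
    · dsimp only
      rw [eLpNorm_sub_comm]
      exact hu3 k
  obtain ⟨ns, -, hns⟩ := hmeas.exists_seq_tendsto_ae
  refine ⟨fun k x => c + d * sin (u (ns k) x), fun k => ?_, ?_⟩
  · have hsm : ContDiff ℝ 2 (u (ns k)) := contDiff_infty.1 (hu2 (ns k)) 2
    refine exists_isTame_const_add (φ := fun x => d * sin (u (ns k) x))
      (contDiff_const.mul hsm.sin) ?_ fun x => ?_
    · exact (hu1 (ns k)).comp_left (g := fun y => d * sin y) (by simp)
    · have h1 := mul_le_mul_of_nonneg_left (neg_one_le_sin (u (ns k) x)) hd0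
      have h2 := mul_le_mul_of_nonneg_left (sin_le_one (u (ns k) x)) hd0
      constructor <;> linarith
  · filter_upwards [hns] with x hx
    rw [hFh x]
    exact ((continuous_sin.tendsto _).comp hx |>.const_mul d).const_add c

/-- The two-function Gaussian hypercontractive inequality. -/
lemma integral_prod_rpow_mul_rpow_le [FiniteDimensional ℝ E] [MeasurableSpace E] [BorelSpace E]
    {μ : Measure E} [IsGaussian μ]
    (hμ : ∫ x, x ∂μ = 0) {α β : ℝ} (hα : 0 < α) (hα1 : α < 1) (hβ : 0 < β) (hβ1 : β < 1)
    (θ : ℝ) (hθ : cos θ ^ 2 * (α * β) ≤ (1 - α) * (1 - β))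
    {a b : ℝ} (ha : 0 < a) {F G : E → ℝ} (hF : Measurable F) (hG : Measurable G)
    (hFab : ∀ x, F x ∈ Icc a b) (hGab : ∀ x, G x ∈ Icc a b) :
    ∫ p : E × E, F (cos θ • p.1 + sin θ • p.2) ^ α * G p.1 ^ β ∂(μ.prod μ) ≤
      (∫ x, F x ∂μ) ^ α * (∫ x, G x ∂μ) ^ β := by
  have : CompleteSpace E := FiniteDimensional.complete ℝ E
  have : ProperSpace E := FiniteDimensional.proper_real E
  obtain ⟨f, hf, hfF⟩ := exists_isTame_seq_tendsto_ae μ hF hFab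
  obtain ⟨g, hg, hgG⟩ := exists_isTame_seq_tendsto_ae μ hG hGab
  have hfc : ∀ k, Continuous (f k) := fun k => (hf k).choose_spec.2.continuous
  have hgc : ∀ k, Continuous (g k) := fun k => (hg k).choose_spec.2.continuous
  have hfab : ∀ k x, f k x ∈ Icc a b := fun k => (hf k).choose_spec.2.1
  have hgab : ∀ k x, g k x ∈ Icc a b := fun k => (hg k).choose_spec.2.1
  have hlim : ∀ {u : ℕ → E → ℝ} {U : E → ℝ}, (∀ k, Continuous (u k)) → (∀ k x, u k x ∈ Icc a b) →
      (∀ᵐ x ∂μ, Tendsto (fun k => u k x) atTop (𝓝 (U x))) →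
      Tendsto (fun k => ∫ x, u k x ∂μ) atTop (𝓝 (∫ x, U x ∂μ)) := by
    intro u U hu huab hU
    refine tendsto_integral_of_dominated_convergence (fun _ => b)
      (fun k => (hu k).aestronglyMeasurable) (integrable_const _) (fun k => .of_forall fun x => ?_)
      hU
    rw [Real.norm_eq_abs, abs_of_nonneg (ha.le.trans (huab k x).1)]
    exact (huab k x).2
  have hright : Tendsto (fun k => (∫ x, f k x ∂μ) ^ α * (∫ x, g k x ∂μ) ^ β) atTop
      (𝓝 ((∫ x, F x ∂μ) ^ α * (∫ x, G x ∂μ) ^ β)) :=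
    ((hlim hfc hfab hfF).rpow_const (Or.inr hα.le)).mul
      ((hlim hgc hgab hgG).rpow_const (Or.inr hβ.le))
  have hmp := measurePreserving_cos_smul_add_sin_smul hμ θ
  have hleft : Tendsto (fun k => ∫ p : E × E, f k (cos θ • p.1 + sin θ • p.2) ^ α * g k p.1 ^ β
      ∂(μ.prod μ)) atTop
      (𝓝 (∫ p : E × E, F (cos θ • p.1 + sin θ • p.2) ^ α * G p.1 ^ β ∂(μ.prod μ))) := by
    refine tendsto_integral_of_dominated_convergence (fun _ => b ^ α * b ^ β) (fun k => ?_)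
      (integrable_const _) (fun k => .of_forall fun p => ?_) ?_
    · have h1 := hfc k
      have h2 := hgc k
      exact (((by fun_prop : Continuous fun p : E × E => f k (cos θ • p.1 + sin θ • p.2)).rpow_const
        fun _ => Or.inr hα.le).mul ((by fun_prop : Continuous fun p : E × E => g k p.1).rpow_const
          fun _ => Or.inr hβ.le)).aestronglyMeasurable
    · obtain ⟨K₁, -, h1⟩ := hf k
      obtain ⟨K₂, -, h2⟩ := hg k
      have := (h1.mono (le_max_left K₁ K₂)).rpow_mul_rpow_mem_Icc ha
        (h2.mono (le_max_right K₁ K₂)) hα hβ (cos θ • p.1 + sin θ • p.2) p.1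
      rw [Real.norm_eq_abs, abs_of_nonneg this.1]
      exact this.2
    · have h1 := hmp.quasiMeasurePreserving.ae hfF
      have h2 := (measurePreserving_fst (μ := μ) (ν := μ)).quasiMeasurePreserving.ae hgG
      filter_upwards [h1, h2] with p hp1 hp2
      exact (hp1.rpow_const (Or.inr hα.le)).mul (hp2.rpow_const (Or.inr hβ.le))
  refine le_of_tendsto_of_tendsto' hleft hright fun k => ?_
  obtain ⟨K₁, hK₁, h1⟩ := hf k
  obtain ⟨K₂, -, h2⟩ := hg k
  exact integral_prod_rpow_mul_rpow_le_of_isTame hμ hα hα1 hβ hβ1 θ hθ ha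
    (hK₁.trans (le_max_left K₁ K₂)) (h1.mono (le_max_left _ _)) (h2.mono (le_max_right _ _))

end Approximation

section Heat

lemma stdGaussian_eq_withDensity (n : ℕ) :
    stdGaussian (EuclideanSpace ℝ (Fin n)) = volume.withDensity
      fun z => ENNReal.ofReal ((2 * π) ^ (-(n : ℝ) / 2) * rexp (-‖z‖ ^ 2 / 2)) := by
  have hb : 0 < (1 / 2 : ℂ).re := by norm_num
  have hintegr : Integrable (fun z : EuclideanSpace ℝ (Fin n) =>
      (2 * π) ^ (-(n : ℝ) / 2) * rexp (-‖z‖ ^ 2 / 2)) := by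
    refine Integrable.const_mul ?_ _
    have := (GaussianFourier.integrable_cexp_neg_mul_sq_norm_add hb 0
      (0 : EuclideanSpace ℝ (Fin n))).norm
    refine this.congr (.of_forall fun z => ?_)
    dsimp only
    rw [Complex.norm_exp, show (-(1 / 2 : ℂ) * (‖z‖ : ℂ) ^ 2 +
      0 * ((inner ℝ (0 : EuclideanSpace ℝ (Fin n)) z : ℝ) : ℂ)) = ((-‖z‖ ^ 2 / 2 : ℝ) : ℂ) by
        push_cast; ring, Complex.ofReal_re]
  have := isFiniteMeasure_withDensity_ofReal hintegr.2
  refine Measure.ext_of_charFun (funext fun w => ?_)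
  rw [charFun_stdGaussian, charFun_apply, integral_withDensity_eq_integral_toReal_smul
    (by fun_prop) (.of_forall fun _ => ENNReal.ofReal_lt_top)]
  have key := GaussianFourier.integral_cexp_neg_mul_sq_norm_add hb Complex.I w
  have hpt : ∀ z : EuclideanSpace ℝ (Fin n),
      (ENNReal.ofReal ((2 * π) ^ (-(n : ℝ) / 2) * rexp (-‖z‖ ^ 2 / 2))).toReal •
        Complex.exp ((inner ℝ z w : ℝ) * Complex.I) =
      (((2 * π) ^ (-(n : ℝ) / 2) : ℝ) : ℂ) *
        Complex.exp (-(1 / 2) * (‖z‖ : ℂ) ^ 2 + Complex.I * (inner ℝ w z : ℝ)) := by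
    intro z
    rw [ENNReal.toReal_ofReal (by positivity), Complex.real_smul, Complex.ofReal_mul,
      Complex.ofReal_exp, mul_assoc, ← Complex.exp_add, real_inner_comm]
    congr 2
    push_cast
    ring
  simp_rw [hpt]
  rw [integral_const_mul, key, ← mul_assoc]
  have hc : (((2 * π) ^ (-(n : ℝ) / 2) : ℝ) : ℂ) * (π / (1 / 2 : ℂ)) ^
      ((Module.finrank ℝ (EuclideanSpace ℝ (Fin n)) : ℂ) / 2) = 1 := by
    have h1 : (π / (1 / 2 : ℂ)) = ((2 * π : ℝ) : ℂ) := by push_cast; ring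
    have h2 : ((Module.finrank ℝ (EuclideanSpace ℝ (Fin n)) : ℂ) / 2) = ((n / 2 : ℝ) : ℂ) := by
      simp
    rw [h1, h2, ← Complex.ofReal_cpow (by positivity), ← Complex.ofReal_mul,
      ← Real.rpow_add (by positivity), neg_div, neg_add_cancel, Real.rpow_zero, Complex.ofReal_one]
  rw [hc, one_mul]
  congr 1
  rw [Complex.I_sq]
  ring

/-- The heat semigroup as an average over a standard Gaussian vector. -/
lemma heat_eq_integral_stdGaussian (n : ℕ) {t : ℝ} (ht : 0 ≤ t)
    (f : EuclideanSpace ℝ (Fin n) → ℝ) (x : EuclideanSpace ℝ (Fin n)) :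
    heat n t f x = ∫ z, f (x + √(2 * t) • z) ∂(stdGaussian (EuclideanSpace ℝ (Fin n))) := by
  rcases ht.eq_or_lt with rfl | ht
  · simp [heat]
  rw [heat, if_neg ht.ne', stdGaussian_eq_withDensity,
    integral_withDensity_eq_integral_toReal_smul (by fun_prop)
      (.of_forall fun _ => ENNReal.ofReal_lt_top)]
  have hsq : √(2 * t) ^ 2 = 2 * t := Real.sq_sqrt (by positivity)
  have hpt : ∀ z : EuclideanSpace ℝ (Fin n),
      (ENNReal.ofReal ((2 * π) ^ (-(n : ℝ) / 2) * rexp (-‖z‖ ^ 2 / 2))).toReal •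
        f (x + √(2 * t) • z) = (2 * π) ^ (-(n : ℝ) / 2) *
        (fun v => f (x + v) * rexp (-‖x - (x + v)‖ ^ 2 / (4 * t))) (√(2 * t) • z) := by
    intro z
    rw [ENNReal.toReal_ofReal (by positivity), smul_eq_mul, mul_assoc, mul_comm (rexp _)]
    dsimp only
    congr 3
    rw [sub_add_cancel_left, norm_neg, norm_smul, mul_pow, Real.norm_eq_abs, sq_abs, hsq]
    field_simp
    ring
  rw [integral_congr_ae (.of_forall hpt), integral_const_mul,
    Measure.integral_comp_smul_of_nonneg volume
      (fun v => f (x + v) * rexp (-‖x - (x + v)‖ ^ 2 / (4 * t))) _ (hR := by positivity),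
    integral_add_left_eq_self (fun y => f y * rexp (-‖x - y‖ ^ 2 / (4 * t))) x, smul_eq_mul,
    ← mul_assoc]
  congr 1
  rw [finrank_euclideanSpace_fin, Real.sqrt_eq_rpow, ← Real.rpow_natCast, ← Real.rpow_mul
    (by positivity), ← Real.rpow_neg (by positivity), show -(1 / 2 * (n : ℝ)) = -(n : ℝ) / 2 by ring,
    ← Real.mul_rpow (by positivity) (by positivity)]
  congr 1
  ring

end Heat

end GaussianHypercontractivity

theorem local_hypercontractivity_heat (n : ℕ) (hn : 1 ≤ n)
    (s t : ℝ) (hs : 0 < s) (hst : s ≤ t)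
    (q₁ q₂ : ℝ) (hq₁ : 1 < q₁) (hq : q₁ ≤ q₂) (hrel : (q₂ - 1) / (q₁ - 1) = t / s)
    (f : EuclideanSpace ℝ (Fin n) → ℝ) (hf : Measurable f)
    (a b : ℝ) (ha : 0 < a) (hab : ∀ x, a ≤ f x ∧ f x ≤ b)
    (x : EuclideanSpace ℝ (Fin n)) :
    (heat n s (fun y => heat n (t - s) f y ^ q₂) x) ^ (1 / q₂) ≤
      (heat n t (fun y => f y ^ q₁) x) ^ (1 / q₁) := by
  have ht : 0 < t := hs.trans_le hst
  have hq₁0 : 0 < q₁ := by linarith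
  have hq₂0 : 0 < q₂ := by linarith
  have hq₁1 : 0 < q₁ - 1 := by linarith
  have hq₂1 : 0 < q₂ - 1 := by linarith
  set μ := ProbabilityTheory.stdGaussian (EuclideanSpace ℝ (Fin n))
  set g : EuclideanSpace ℝ (Fin n) → ℝ := heat n (t - s) f with hgd
  have hg : ∀ y, g y = ∫ z, f (y + √(2 * (t - s)) • z) ∂μ :=
    heat_eq_integral_stdGaussian n (sub_nonneg.2 hst) f
  have hgm : Measurable g := by
    rw [funext hg]
    have : Measurable fun p : EuclideanSpace ℝ (Fin n) × EuclideanSpace ℝ (Fin n) =>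
        f (p.1 + √(2 * (t - s)) • p.2) := hf.comp (by fun_prop)
    exact this.stronglyMeasurable.integral_prod_right.measurable
  have hgab : ∀ y, g y ∈ Set.Icc a b := fun y => by
    rw [hg]
    exact integral_mem_Icc (.of_mem_Icc a b (hf.comp (by fun_prop)).aemeasurable
      (.of_forall fun z => hab _)) fun z => hab _
  set θ := arccos √(s / t)
  have hst1 : s / t ≤ 1 := (div_le_one ht).2 hst
  have hcos : cos θ = √(s / t) :=
    cos_arccos (by linarith [Real.sqrt_nonneg (s / t)]) (Real.sqrt_le_one.2 hst1)
  have hsin : sin θ = √(1 - s / t) := by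
    rw [sin_arccos, Real.sq_sqrt (by positivity)]
  have htc : √(2 * t) * cos θ = √(2 * s) := by
    rw [hcos, ← Real.sqrt_mul (by positivity)]
    congr 1
    field_simp
  have hts : √(2 * t) * sin θ = √(2 * (t - s)) := by
    rw [hsin, ← Real.sqrt_mul (by positivity)]
    congr 1
    field_simp
  have hrel' : (q₂ - 1) * s = t * (q₁ - 1) := by
    rwa [div_eq_div_iff hq₁1.ne' hs.ne'] at hrel
  have hθ : cos θ ^ 2 * (1 / q₁ * ((q₂ - 1) / q₂)) ≤ (1 - 1 / q₁) * (1 - (q₂ - 1) / q₂) := by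
    rw [hcos, Real.sq_sqrt (by positivity)]
    refine le_of_eq ?_
    field_simp
    linear_combination hrel'
  have hpow : ∀ {u : ℝ}, u ∈ Set.Icc a b → ∀ {q : ℝ}, 0 < q → q = q₁ ∨ q = q₂ →
      u ^ q ∈ Set.Icc (min (a ^ q₁) (a ^ q₂)) (max (b ^ q₁) (b ^ q₂)) := by
    intro u hu q hq0 hq
    have h1 := Real.rpow_le_rpow ha.le hu.1 hq0.le
    have h2 := Real.rpow_le_rpow (ha.le.trans hu.1) hu.2 hq0.le
    rcases hq with rfl | rfl
    · exact ⟨(min_le_left _ _).trans h1, h2.trans (le_max_left _ _)⟩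
    · exact ⟨(min_le_right _ _).trans h1, h2.trans (le_max_right _ _)⟩
  have main := integral_prod_rpow_mul_rpow_le (μ := μ) ProbabilityTheory.integral_id_stdGaussian
    (α := 1 / q₁) (β := (q₂ - 1) / q₂) (by positivity) ((div_lt_one hq₁0).2 hq₁) (by positivity)
    ((div_lt_one hq₂0).2 (by linarith)) θ hθ (a := min (a ^ q₁) (a ^ q₂))
    (b := max (b ^ q₁) (b ^ q₂)) (by positivity)
    (F := fun v => f (x + √(2 * t) • v) ^ q₁) (G := fun v => g (x + √(2 * s) • v) ^ q₂)
    ((hf.comp (by fun_prop)).pow_const _) ((hgm.comp (by fun_prop)).pow_const _)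
    (fun v => hpow (hab _) hq₁0 (Or.inl rfl)) (fun v => hpow (hgab _) hq₂0 (Or.inr rfl))
  rw [heat_eq_integral_stdGaussian n hs.le, heat_eq_integral_stdGaussian n ht.le]
  set I := ∫ v, g (x + √(2 * s) • v) ^ q₂ ∂μ with hI
  have hIpos : 0 < I := by
    have hGi : Integrable (fun v => g (x + √(2 * s) • v) ^ q₂) μ :=
      .of_mem_Icc _ _ ((hgm.comp (by fun_prop)).pow_const _).aemeasurable
        (.of_forall fun v => hpow (hgab _) hq₂0 (Or.inr rfl))
    have := (integral_mem_Icc hGi fun v => hpow (hgab _) hq₂0 (Or.inr rfl)).1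
    exact lt_of_lt_of_le (by positivity) this
  have hleft : ∫ p : EuclideanSpace ℝ (Fin n) × EuclideanSpace ℝ (Fin n),
      (f (x + √(2 * t) • (cos θ • p.1 + sin θ • p.2)) ^ q₁) ^ (1 / q₁) *
      (g (x + √(2 * s) • p.1) ^ q₂) ^ ((q₂ - 1) / q₂) ∂(μ.prod μ) = I := by
    have hpt : ∀ p : EuclideanSpace ℝ (Fin n) × EuclideanSpace ℝ (Fin n),
        (f (x + √(2 * t) • (cos θ • p.1 + sin θ • p.2)) ^ q₁) ^ (1 / q₁) *
        (g (x + √(2 * s) • p.1) ^ q₂) ^ ((q₂ - 1) / q₂) =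
        f (x + √(2 * s) • p.1 + √(2 * (t - s)) • p.2) * g (x + √(2 * s) • p.1) ^ (q₂ - 1) := by
      intro p
      rw [← Real.rpow_mul (ha.le.trans (hab _).1), ← Real.rpow_mul (ha.le.trans (hgab _).1),
        mul_one_div_cancel hq₁0.ne', Real.rpow_one, mul_div_cancel₀ _ hq₂0.ne', smul_add, smul_smul,
        smul_smul, htc, hts, add_assoc]
    simp_rw [hpt]
    rw [integral_prod, hI]
    · refine integral_congr_ae (.of_forall fun v => ?_)
      dsimp only
      rw [integral_mul_const, ← hg, ← Real.rpow_one_add' (ha.le.trans (hgab _).1) (by linarith),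
        add_sub_cancel]
    · have hm : Measurable fun p : EuclideanSpace ℝ (Fin n) × EuclideanSpace ℝ (Fin n) =>
          f (x + √(2 * s) • p.1 + √(2 * (t - s)) • p.2) *
          g (x + √(2 * s) • p.1) ^ (q₂ - 1) :=
        (hf.comp (by fun_prop)).mul ((hgm.comp (by fun_prop)).pow_const _)
      refine .of_mem_Icc 0 (b * b ^ (q₂ - 1)) hm.aemeasurable (.of_forall fun p => ?_)
      have h1 := hab (x + √(2 * s) • p.1 + √(2 * (t - s)) • p.2)
      have h2 := hgab (x + √(2 * s) • p.1)
      have h3 := ha.trans_le h2.1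
      have h4 := Real.rpow_le_rpow h3.le h2.2 hq₂1.le
      have h5 := ha.trans_le h1.1
      exact ⟨by positivity, mul_le_mul h1.2 h4 (by positivity) (h5.le.trans h1.2)⟩
  rw [hleft] at main
  have hsplit : I = I ^ (1 / q₂) * I ^ ((q₂ - 1) / q₂) := by
    rw [← Real.rpow_add hIpos, ← add_div, add_sub_cancel, div_self hq₂0.ne', Real.rpow_one]
  refine le_of_mul_le_mul_right ?_ (Real.rpow_pos_of_pos hIpos ((q₂ - 1) / q₂))
  rw [← hsplit]
  exact main
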